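/- arXiv:math/9502222 — 3 statements merged into one kernel-verified Lean document; each statement's English description precedes it below -/
import Mathlib

section
/- Let D = (V,E) be a finite directed graph with distinguished vertices b and r (b ≠ r) such that from every vertex there is a directed path to at least one of b and r. Then D admits a Richman cost function, i.e., there exists a function R : V → [0,1] with R(b) = 0, R(r) = 1, and R(v) = (R⁺(v) + R⁻(v))/2 for every vertex v ∉ {b,r}. -/
/-!
The averaging operator `f ↦ (f⁺ + f⁻) / 2`, modified to take the prescribed boundary values, is a
monotone self-map of the complete lattice `V → [0, 1]`, so it has a fixed point by the
Knaster–Tarski theorem. A fixed point is a Richman cost function, provided that every interior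
vertex has a successor; a directed path to `b` or `r` supplies one.
-/

open Relation Filter

variable {V : Type*}

/-- `fplus E f v` is `f⁺(v) = sup_{w ∈ S(v)} f(w)`, where `S(v)` is the set of successors of `v`. -/
noncomputable def fplus (E : V → V → Prop) (f : V → ℝ) (v : V) : ℝ :=
  sSup (f '' {w | E v w})

/-- `fminus E f v` is `f⁻(v) = inf_{u ∈ S(v)} f(u)`. -/
noncomputable def fminus (E : V → V → Prop) (f : V → ℝ) (v : V) : ℝ :=
  sInf (f '' {w | E v w})

/-- A Richman cost function: `R : V → [0,1]`, `R(b) = 0`, `R(r) = 1`, and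
`R(v) = (R⁺(v) + R⁻(v))/2` for every `v ∉ {b, r}`. -/
def IsRichman (E : V → V → Prop) (b r : V) (R : V → ℝ) : Prop :=
  (∀ v, R v ∈ Set.Icc (0 : ℝ) 1) ∧ R b = 0 ∧ R r = 1 ∧
    ∀ v, v ≠ b → v ≠ r → R v = (fplus E R v + fminus E R v) / 2

lemma exists_eqOn_and_eqOn_compl_of_monotone {ι α : Type*} [CompleteLattice α]
    {T : (ι → α) → ι → α} (hT : Monotone T) (s : Set ι) (g : ι → α) :
    ∃ f : ι → α, Set.EqOn f g s ∧ Set.EqOn f (T f) sᶜ := by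
  classical
  let P : (ι → α) →o (ι → α) :=
    { toFun f := s.piecewise g (T f)
      monotone' _ _ h := Set.piecewise_mono (fun _ _ ↦ le_rfl) fun i _ ↦ hT h i }
  obtain ⟨f, hf⟩ : ∃ f, s.piecewise g (T f) = f := ⟨P.lfp, P.map_lfp⟩
  exact ⟨f, fun i hi ↦ (congrFun hf i).symm.trans (s.piecewise_eq_of_mem _ _ hi),
    fun i hi ↦ (congrFun hf i).symm.trans (s.piecewise_eq_of_notMem _ _ hi)⟩

lemma exists_rel_of_reflTransGen_of_ne {E : V → V → Prop} {v w : V} (h : ReflTransGen E v w)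
    (hne : v ≠ w) : ∃ u, E v u :=
  (h.cases_head.resolve_left hne).imp fun _ ↦ And.left

section Icc

variable {l u : ℝ}

/-- The arithmetic mean of two points of a real interval, as a point of that interval;
keeping the interval as codomain makes its complete lattice structure available. -/
noncomputable def iccMean (x y : Set.Icc l u) : Set.Icc l u :=
  ⟨(x + y) / 2, by constructor <;> linarith [x.2.1, x.2.2, y.2.1, y.2.2]⟩

lemma iccMean_le_iccMean {x x' y y' : Set.Icc l u} (hx : x ≤ x') (hy : y ≤ y') :
    iccMean x y ≤ iccMean x' y' := by
  have hx' : (x : ℝ) ≤ x' := hx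
  have hy' : (y : ℝ) ≤ y' := hy
  change ((x : ℝ) + y) / 2 ≤ (x' + y') / 2
  gcongr

variable [Fact (l ≤ u)] (E : V → V → Prop)

/-- The Richman averaging operator `f ↦ (f⁺ + f⁻) / 2` on functions with values in `[l, u]`.
The supremum and infimum are those of the complete lattice `[l, u]`: they agree with `fplus` and
`fminus` at vertices that have a successor, and the value at any other vertex is `(l + u) / 2`. -/
noncomputable def richmanAverage (f : V → Set.Icc l u) (v : V) : Set.Icc l u :=
  iccMean (⨆ w ∈ {w | E v w}, f w) (⨅ w ∈ {w | E v w}, f w)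

lemma monotone_richmanAverage :
    Monotone (richmanAverage E : (V → Set.Icc l u) → V → Set.Icc l u) :=
  fun _ _ h _ ↦ iccMean_le_iccMean (iSup₂_mono fun w _ ↦ h w) (iInf₂_mono fun w _ ↦ h w)

variable {E}

lemma coe_richmanAverage {v : V} (hv : ∃ w, E v w) (f : V → Set.Icc l u) :
    (richmanAverage E f v : ℝ) =
      (fplus E (fun w ↦ (f w : ℝ)) v + fminus E (fun w ↦ (f w : ℝ)) v) / 2 := by
  have hne : (f '' {w | E v w}).Nonempty := Set.Nonempty.image f hv
  have hlu : l ≤ u := Fact.out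
  simp only [richmanAverage, iccMean, fplus, fminus, ← sSup_image, ← sInf_image,
    Set.Icc.coe_sSup hlu hne, Set.Icc.coe_sInf hlu hne, Set.image_image]

lemma exists_eqOn_and_eq_average {s : Set V} (hE : ∀ v ∉ s, ∃ w, E v w) (g : V → Set.Icc l u) :
    ∃ R : V → Set.Icc l u, Set.EqOn R g s ∧ ∀ v ∉ s,
      (R v : ℝ) = (fplus E (fun w ↦ (R w : ℝ)) v + fminus E (fun w ↦ (R w : ℝ)) v) / 2 := by
  obtain ⟨R, hR, hR'⟩ := exists_eqOn_and_eqOn_compl_of_monotone (monotone_richmanAverage E) s g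
  exact ⟨R, hR, fun v hv ↦ (congrArg _ (hR' hv)).trans (coe_richmanAverage (hE v hv) R)⟩

end Icc

theorem richman_exists_general {E : V → V → Prop} {b r : V} (hbr : b ≠ r)
    (hE : ∀ v, v ≠ b → v ≠ r → ∃ w, E v w) : ∃ R : V → ℝ, IsRichman E b r R := by
  have : Fact ((0 : ℝ) ≤ 1) := ⟨zero_le_one⟩
  obtain ⟨R, hR, havg⟩ := exists_eqOn_and_eq_average (s := {b, r})
    (fun v hv ↦ hE v (hv <| .inl ·) (hv <| .inr ·)) (Set.indicator {r} (1 : V → Set.Icc (0 : ℝ) 1))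
  have hb : R b = 0 := by simpa [hbr] using hR (Set.mem_insert b {r})
  have hr : R r = 1 := by simpa using hR (Set.mem_insert_of_mem b rfl)
  exact ⟨fun v ↦ R v, fun v ↦ (R v).2, congrArg _ hb, congrArg _ hr,
    fun v hvb hvr ↦ havg v (by simp [hvb, hvr])⟩

/-- A finite digraph with distinguished vertices `b ≠ r`, such that from every vertex there is
a directed path to `b` or to `r`, admits a Richman cost function. -/
theorem richman_exists [Fintype V] [DecidableEq V] (E : V → V → Prop) (b r : V)
    (hbr : b ≠ r)
    (hreach : ∀ v, ReflTransGen E v b ∨ ReflTransGen E v r) :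
    ∃ R : V → ℝ, IsRichman E b r R :=
  richman_exists_general hbr fun v hvb hvr ↦ (hreach v).elim
    (exists_rel_of_reflTransGen_of_ne · hvb) (exists_rel_of_reflTransGen_of_ne · hvr)
end

section
/- Define R(v,t) for v ∈ V and t ∈ ℕ by: R(b,t) = 0 and R(r,t) = 1 for all t; R(v,0) = 1 for v ∉ {b,r}; and R(v,t) = (R⁺(v,t−1) + R⁻(v,t−1))/2 for v ∉ {b,r} and t > 0, where R⁺(v,t−1) = max_{w ∈ S(v)} R(w,t−1) and R⁻(v,t−1) = min_{u ∈ S(v)} R(u,t−1). Then for every vertex v and every t ≥ 0, R(v,t+1) ≤ R(v,t). -/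
open Relation Filter

variable {V : Type*}

/-- The auxiliary function `R(v,t)`: `R(b,t) = 0`, `R(r,t) = 1`, `R(v,0) = 1` for `v ∉ {b,r}`,
and `R(v,t) = (R⁺(v,t-1) + R⁻(v,t-1))/2` for `v ∉ {b,r}`, `t > 0`. -/
noncomputable def Rseq [DecidableEq V] (E : V → V → Prop) (b r : V) : ℕ → V → ℝ
  | 0 => fun v => if v = b then 0 else 1
  | t + 1 => fun v =>
      if v = b then 0
      else if v = r then 1
      else (fplus E (Rseq E b r t) v + fminus E (Rseq E b r t) v) / 2

/-!
One time step is an averaging operator that is monotone on bounded functions and maps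
`[0,1]`-valued functions to `[0,1]`-valued functions. Since `R(·,0)` is the largest `[0,1]`-valued
function that vanishes at `b`, we get `R(·,1) ≤ R(·,0)`, and monotonicity propagates this inequality
to all later times.
-/

section Extrema

variable {E : V → V → Prop} {f g : V → ℝ} {v : V} {x y : ℝ}

theorem fplus_le_fplus (hv : {w | E v w}.Nonempty) (hg : BddAbove (g '' {w | E v w}))
    (hfg : ∀ w, E v w → f w ≤ g w) : fplus E f v ≤ fplus E g v :=
  csSup_le (hv.image f) <| Set.forall_mem_image.2 fun w hw =>
    (hfg w hw).trans (le_csSup hg (Set.mem_image_of_mem g hw))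

theorem fminus_le_fminus (hv : {w | E v w}.Nonempty) (hf : BddBelow (f '' {w | E v w}))
    (hfg : ∀ w, E v w → f w ≤ g w) : fminus E f v ≤ fminus E g v :=
  le_csInf (hv.image g) <| Set.forall_mem_image.2 fun w hw =>
    (csInf_le hf (Set.mem_image_of_mem f hw)).trans (hfg w hw)

theorem fplus_mem_Icc (hv : {w | E v w}.Nonempty)
    (hf : Set.MapsTo f {w | E v w} (Set.Icc x y)) : fplus E f v ∈ Set.Icc x y := by
  have hbdd : BddAbove (f '' {w | E v w}) := bddAbove_Icc.mono hf.image_subset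
  obtain ⟨w, hw⟩ := hv
  exact ⟨(hf hw).1.trans (le_csSup hbdd (Set.mem_image_of_mem f hw)),
    csSup_le ⟨f w, w, hw, rfl⟩ (Set.forall_mem_image.2 fun _ hu => (hf hu).2)⟩

theorem fminus_mem_Icc (hv : {w | E v w}.Nonempty)
    (hf : Set.MapsTo f {w | E v w} (Set.Icc x y)) : fminus E f v ∈ Set.Icc x y := by
  have hbdd : BddBelow (f '' {w | E v w}) := bddBelow_Icc.mono hf.image_subset
  obtain ⟨w, hw⟩ := hv
  exact ⟨le_csInf ⟨f w, w, hw, rfl⟩ (Set.forall_mem_image.2 fun _ hu => (hf hu).1),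
    (csInf_le hbdd (Set.mem_image_of_mem f hw)).trans (hf hw).2⟩

end Extrema

section Step

variable [DecidableEq V] {E : V → V → Prop} {b r : V} {f g : V → ℝ}

/-- One time step of the recursion for `R(v,t)`: average `f⁺` and `f⁻` away from `b` and `r`, and
reset the boundary values to `0` at `b` and `1` at `r`. Iterating it yields `Rseq`. As in `Rseq`,
the value at `b` takes precedence. -/
noncomputable def richmanStep (E : V → V → Prop) (b r : V) (f : V → ℝ) (v : V) : ℝ :=
  if v = b then 0 else if v = r then 1 else (fplus E f v + fminus E f v) / 2

theorem richmanStep_left : richmanStep E b r f b = 0 := if_pos rfl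

theorem richmanStep_le_richmanStep (hE : ∀ v, v ≠ b → v ≠ r → {w | E v w}.Nonempty)
    (hf : BddBelow (Set.range f)) (hg : BddAbove (Set.range g)) (hfg : f ≤ g) :
    richmanStep E b r f ≤ richmanStep E b r g := by
  intro v
  unfold richmanStep
  split_ifs with hb hr
  · exact le_rfl
  · exact le_rfl
  · have hplus : fplus E f v ≤ fplus E g v :=
      fplus_le_fplus (hE v hb hr) (hg.mono (Set.image_subset_range _ _)) fun w _ => hfg w
    have hminus : fminus E f v ≤ fminus E g v :=
      fminus_le_fminus (hE v hb hr) (hf.mono (Set.image_subset_range _ _)) fun w _ => hfg w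
    linarith

theorem richmanStep_mem_Icc (hE : ∀ v, v ≠ b → v ≠ r → {w | E v w}.Nonempty)
    (hf : ∀ v, f v ∈ Set.Icc 0 1) (v : V) : richmanStep E b r f v ∈ Set.Icc 0 1 := by
  unfold richmanStep
  split_ifs with hb hr
  · exact Set.left_mem_Icc.2 zero_le_one
  · exact Set.right_mem_Icc.2 zero_le_one
  · obtain ⟨hplus_nonneg, hplus_le_one⟩ := fplus_mem_Icc (hE v hb hr) fun w _ => hf w
    obtain ⟨hminus_nonneg, hminus_le_one⟩ := fminus_mem_Icc (hE v hb hr) fun w _ => hf w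
    constructor <;> linarith

theorem Rseq_succ (t : ℕ) : Rseq E b r (t + 1) = richmanStep E b r (Rseq E b r t) := rfl

theorem le_Rseq_zero (hb : f b ≤ 0) (hf : ∀ v, f v ≤ 1) : f ≤ Rseq E b r 0 := by
  intro v
  unfold Rseq
  split_ifs with hv
  · exact hv ▸ hb
  · exact hf v

theorem Rseq_mem_Icc (hE : ∀ v, v ≠ b → v ≠ r → {w | E v w}.Nonempty) (t : ℕ) (v : V) :
    Rseq E b r t v ∈ Set.Icc 0 1 := by
  induction t generalizing v with
  | zero =>
    unfold Rseq
    split_ifs <;> simp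
  | succ t ih => exact richmanStep_mem_Icc hE ih v

theorem Rseq_antitone_general (hE : ∀ v, v ≠ b → v ≠ r → {w | E v w}.Nonempty) :
    Antitone (Rseq E b r) := by
  have hbelow (t : ℕ) : BddBelow (Set.range (Rseq E b r t)) :=
    bddBelow_Icc.mono (Set.range_subset_iff.2 (Rseq_mem_Icc hE t))
  have habove (t : ℕ) : BddAbove (Set.range (Rseq E b r t)) :=
    bddAbove_Icc.mono (Set.range_subset_iff.2 (Rseq_mem_Icc hE t))
  refine antitone_nat_of_succ_le fun t => ?_
  induction t with
  | zero => exact le_Rseq_zero richmanStep_left.le fun v => (Rseq_mem_Icc hE 1 v).2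
  | succ t ih =>
    rw [Rseq_succ (t + 1), Rseq_succ t]
    exact richmanStep_le_richmanStep hE (hbelow (t + 1)) (habove t) ih

end Step

theorem successors_nonempty_of_reflTransGen {E : V → V → Prop} {u v : V}
    (h : ReflTransGen E v u) (hvu : v ≠ u) : {w | E v w}.Nonempty := by
  obtain ⟨w, hw, _⟩ := h.cases_head.resolve_left hvu
  exact ⟨w, hw⟩

/-- The auxiliary function `R(v,t)` is weakly decreasing in `t`. -/
theorem Rseq_antitone [Fintype V] [DecidableEq V] (E : V → V → Prop) (b r : V)
    (hbr : b ≠ r)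
    (hreach : ∀ v, ReflTransGen E v b ∨ ReflTransGen E v r) :
    ∀ (v : V) (t : ℕ), Rseq E b r (t + 1) v ≤ Rseq E b r t v := by
  have hE (v : V) (hb : v ≠ b) (hr : v ≠ r) : {w | E v w}.Nonempty :=
    (hreach v).elim (successors_nonempty_of_reflTransGen · hb)
      (successors_nonempty_of_reflTransGen · hr)
  exact fun v t => Rseq_antitone_general hE t.le_succ v
end

section
/- Let R be any Richman cost function on D. Call an edge (v,u) ∈ E an edge of steepest descent if R(u) = R⁻(v), and let the steepest-descent closure of a vertex z be the set of all vertices reachable from z by a (possibly empty) path all of whose edges are edges of steepest descent. Then for every vertex z with R(z) < 1, the vertex b belongs to the steepest-descent closure of z. -/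
open Relation Filter

variable {V : Type*}

/-!
Let `C` be the steepest-descent closure of `z` and let `R` attain its minimum over `C` at `v`, so
`R v < 1`. If `b ∉ C`, then `v ∉ {b, r}` and `R v` is the average of `R⁻ v` and `R⁺ v`. Since `R⁻ v`
is itself attained in `C`, minimality forces `R⁻ v = R v = R⁺ v`, so every edge out of `v` is of
steepest descent and leads to another minimiser of `R` in `C`. Hence everything reachable from `v`
lies in `C` and has cost `R v`, so neither `b` nor `r` is reachable.
-/

theorem exists_isMinOn_of_isWF_image {α β : Type*} [LinearOrder β] {f : α → β} {s : Set α}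
    (hf : (f '' s).IsWF) (hs : s.Nonempty) : ∃ x ∈ s, IsMinOn f s x := by
  obtain ⟨x, hx, hfx⟩ := hf.min_mem (hs.image f)
  exact ⟨x, hx, fun y hy => hfx.trans_le (hf.min_le _ ⟨y, hy, rfl⟩)⟩

variable {E : V → V → Prop} {f : V → ℝ} {v w : V}

theorem fminus_le (hf : BddBelow (f '' {u | E v u})) (hvw : E v w) : fminus E f v ≤ f w :=
  csInf_le hf ⟨w, hvw, rfl⟩

theorem le_fplus (hf : BddAbove (f '' {u | E v u})) (hvw : E v w) : f w ≤ fplus E f v :=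
  le_csSup hf ⟨w, hvw, rfl⟩

/-- `SteepestDescent E f v u` says that `(v, u)` is an edge of steepest descent for `f`. -/
def SteepestDescent (E : V → V → Prop) (f : V → ℝ) (v u : V) : Prop :=
  E v u ∧ f u = fminus E f v

/-- The set of vertices reachable from `z` by a possibly empty path of edges of steepest descent
for `f`. -/
def steepestDescentClosure (E : V → V → Prop) (f : V → ℝ) (z : V) : Set V :=
  {x | ReflTransGen (SteepestDescent E f) z x}

theorem exists_steepestDescent (hf : (f '' {u | E v u}).IsWF) (hvw : E v w) :
    ∃ u, SteepestDescent E f v u := by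
  obtain ⟨u, hvu, hmin⟩ := exists_isMinOn_of_isWF_image hf ⟨w, hvw⟩
  have hleast : IsLeast (f '' {u | E v u}) (f u) :=
    ⟨⟨u, hvu, rfl⟩, Set.forall_mem_image.2 hmin⟩
  exact ⟨u, hvu, hleast.csInf_eq.symm⟩

theorem steepestDescent_and_eq_of_le_fminus (hbelow : BddBelow (f '' {u | E v u}))
    (habove : BddAbove (f '' {u | E v u})) (havg : f v = (fplus E f v + fminus E f v) / 2)
    (hle : f v ≤ fminus E f v) (hvw : E v w) : SteepestDescent E f v w ∧ f w = f v := by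
  have hlower : fminus E f v ≤ f w := fminus_le hbelow hvw
  have hupper : f w ≤ fplus E f v := le_fplus habove hvw
  have hplus : fplus E f v ≤ f v := by linarith
  have heq : f w = f v := le_antisymm (hupper.trans hplus) (hle.trans hlower)
  exact ⟨⟨hvw, le_antisymm (heq.trans_le hle) hlower⟩, heq⟩

namespace IsRichman

variable {b r x y z : V} {R : V → ℝ}

theorem bddBelow_image (hR : IsRichman E b r R) (s : Set V) : BddBelow (R '' s) :=
  ⟨0, Set.forall_mem_image.2 fun v _ => (hR.1 v).1⟩

theorem bddAbove_image (hR : IsRichman E b r R) (s : Set V) : BddAbove (R '' s) :=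
  ⟨1, Set.forall_mem_image.2 fun v _ => (hR.1 v).2⟩

theorem ne_of_lt_one (hR : IsRichman E b r R) (hx : R x < 1) : x ≠ r := by
  rintro rfl
  exact hx.ne hR.2.2.1

theorem mem_and_isMinOn_closure_of_edge (hR : IsRichman E b r R)
    (hwf : (R '' {u | E x u}).IsWF) (hxb : x ≠ b) (hxr : x ≠ r)
    (hx : x ∈ steepestDescentClosure E R z) (hmin : IsMinOn R (steepestDescentClosure E R z) x)
    (hxy : E x y) :
    y ∈ steepestDescentClosure E R z ∧ IsMinOn R (steepestDescentClosure E R z) y := by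
  obtain ⟨u, hxu⟩ := exists_steepestDescent hwf hxy
  have hle : R x ≤ fminus E R x := (hmin (hx.tail hxu)).trans_eq hxu.2
  obtain ⟨hdesc, heq⟩ := steepestDescent_and_eq_of_le_fminus (hR.bddBelow_image _)
    (hR.bddAbove_image _) (hR.2.2.2 x hxb hxr) hle hxy
  exact ⟨hx.tail hdesc, fun t ht => heq.trans_le (hmin ht)⟩

theorem mem_and_isMinOn_closure_of_reflTransGen (hR : IsRichman E b r R)
    (hwf : (Set.range R).IsWF) (hz : R z < 1) (hb : b ∉ steepestDescentClosure E R z)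
    (hx : x ∈ steepestDescentClosure E R z) (hmin : IsMinOn R (steepestDescentClosure E R z) x)
    (hxy : ReflTransGen E x y) :
    y ∈ steepestDescentClosure E R z ∧ IsMinOn R (steepestDescentClosure E R z) y := by
  induction hxy with
  | refl => exact ⟨hx, hmin⟩
  | @tail v w _ hvw ih =>
    obtain ⟨hv, hvmin⟩ := ih
    have hvb : v ≠ b := ne_of_mem_of_not_mem hv hb
    have hvr : v ≠ r := hR.ne_of_lt_one (lt_of_le_of_lt (hvmin ReflTransGen.refl) hz)
    exact hR.mem_and_isMinOn_closure_of_edge (hwf.mono (Set.image_subset_range _ _))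
      hvb hvr hv hvmin hvw

end IsRichman

theorem steepest_descent_reaches_b_general (E : V → V → Prop) (b r : V)
    (hreach : ∀ v, ReflTransGen E v b ∨ ReflTransGen E v r)
    (R : V → ℝ) (hR : IsRichman E b r R) (hwf : (Set.range R).IsWF)
    (z : V) (hz : R z < 1) :
    b ∈ steepestDescentClosure E R z := by
  by_contra hb
  obtain ⟨v, hv, hmin⟩ := exists_isMinOn_of_isWF_image
    (hwf.mono (Set.image_subset_range R (steepestDescentClosure E R z))) ⟨z, ReflTransGen.refl⟩
  rcases hreach v with hvb | hvr
  · exact hb (hR.mem_and_isMinOn_closure_of_reflTransGen hwf hz hb hv hmin hvb).1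
  · have hrmin := (hR.mem_and_isMinOn_closure_of_reflTransGen hwf hz hb hv hmin hvr).2
    exact hR.ne_of_lt_one (lt_of_le_of_lt (hrmin ReflTransGen.refl) hz) rfl

/-- Steepest-descent lemma: if `R` is a Richman cost function and `R(z) < 1`, then `b` lies in
the closure of `z` under edges of steepest descent (edges `(v,u)` with `R(u) = R⁻(v)`). -/
theorem steepest_descent_reaches_b [Fintype V] [DecidableEq V] (E : V → V → Prop) (b r : V)
    (hbr : b ≠ r)
    (hreach : ∀ v, ReflTransGen E v b ∨ ReflTransGen E v r)
    (R : V → ℝ) (hR : IsRichman E b r R)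
    (z : V) (hz : R z < 1) :
    ReflTransGen (fun v u => E v u ∧ R u = fminus E R v) z b :=
  steepest_descent_reaches_b_general E b r hreach R hR (Set.finite_range R).isWF z hz
end
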